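/- Let (L,[-,-,-]) be a ternary Leibniz algebra over a field K. Then the tensor product L ⊗ L carries a Leibniz algebra structure, where the bracket is the bilinear map determined on pure tensors by {x⊗y, x'⊗y'} := x ⊗ [y,x',y'] + [x,x',y'] ⊗ y. -/

import Mathlib

open TensorProduct

variable {K : Type*} [Field K] {L : Type*} [AddCommGroup L] [Module K L]

/-- The (right) Leibniz identity for a binary bracket. -/
def LeibnizId {A : Type*} [AddCommGroup A] (b : A → A → A) : Prop :=
  ∀ x y z : A, b (b x y) z = b x (b y z) + b (b x z) y

/-- The (right) ternary Leibniz identity for a ternary bracket. -/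
def TernaryLeibnizId (b : L → L → L → L) : Prop :=
  ∀ x y z t u : L,
    b (b x y z) t u = b x y (b z t u) + b x (b y t u) z + b (b x t u) y z

/-!
Right multiplication `ρ (y ⊗ z) = [-, y, z]` sends `L ⊗ L` to the Lie algebra `End L`, which acts on
`L ⊗ L` by the Leibniz rule, and the bracket of the theorem is `{a, b} = ρ b • a`. The ternary
Leibniz identity says that each `ρ b` is a derivation of the ternary bracket, which makes `ρ`
equivariant: `ρ (ρ b • a) = ⁅ρ b, ρ a⁆`. Given equivariance, the Leibniz identity for `{-, -}` is
just the compatibility of the action with the Lie bracket.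
-/

theorem leibnizId_of_map_lie {𝔤 A : Type*} [LieRing 𝔤] [AddCommGroup A] [LieRingModule 𝔤 A]
    (ρ : A → 𝔤) (hρ : ∀ a b, ρ ⁅ρ b, a⁆ = ⁅ρ b, ρ a⁆) : LeibnizId fun a b => ⁅ρ b, a⁆ := by
  intro x y z
  calc ⁅ρ z, ⁅ρ y, x⁆⁆ = ⁅⁅ρ z, ρ y⁆, x⁆ + ⁅ρ y, ⁅ρ z, x⁆⁆ := leibniz_lie _ _ _
    _ = ⁅ρ ⁅ρ z, y⁆, x⁆ + ⁅ρ y, ⁅ρ z, x⁆⁆ := by rw [hρ]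

section TernaryBracket

attribute [local instance] LieRing.ofAssociativeRing

variable {R M : Type*} [CommRing R] [AddCommGroup M] [Module R M]
  (t : M →ₗ[R] M →ₗ[R] M →ₗ[R] M)

/-- A derivation of a ternary bracket: an endomorphism obeying the Leibniz rule in all three
arguments. -/
def IsTernaryDerivation (D : Module.End R M) : Prop :=
  ∀ x y z, D (t x y z) = t x y (D z) + t x (D y) z + t (D x) y z

/-- Right multiplication `y ⊗ z ↦ [-, y, z]` of a ternary bracket, as a linear map into
endomorphisms. -/
def ternaryRightMul : M ⊗[R] M →ₗ[R] Module.End R M :=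
  (TensorProduct.uncurry (.id R) M M M ∘ₗ t).flip

@[simp]
theorem ternaryRightMul_tmul (x y z : M) : ternaryRightMul t (y ⊗ₜ z) x = t x y z :=
  rfl

/-- The bracket `{a, b}` on `M ⊗ M` induced by a ternary bracket: right multiplication by `b`,
acting on `a` through the tensor product of Lie modules over `End M`. -/
def ternaryTensorBracket : M ⊗[R] M →ₗ[R] M ⊗[R] M →ₗ[R] M ⊗[R] M :=
  ((LieModule.toEnd R (Module.End R M) (M ⊗[R] M)).toLinearMap ∘ₗ ternaryRightMul t).flip

theorem ternaryTensorBracket_apply (a b : M ⊗[R] M) :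
    ternaryTensorBracket t a b = ⁅ternaryRightMul t b, a⁆ :=
  rfl

theorem ternaryTensorBracket_tmul (x y x' y' : M) :
    ternaryTensorBracket t (x ⊗ₜ y) (x' ⊗ₜ y') = x ⊗ₜ t y x' y' + t x x' y' ⊗ₜ y := by
  simp [ternaryTensorBracket_apply, add_comm]

variable {t}

theorem IsTernaryDerivation.ternaryRightMul_lie {D : Module.End R M}
    (hD : IsTernaryDerivation t D) (a : M ⊗[R] M) :
    ternaryRightMul t ⁅D, a⁆ = ⁅D, ternaryRightMul t a⁆ := by
  induction a with
  | zero => simp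
  | add a b ha hb => simp only [lie_add, map_add, ha, hb]
  | tmul y z =>
    ext x
    calc ternaryRightMul t ⁅D, y ⊗ₜ[R] z⁆ x = t x (D y) z + t x y (D z) := by simp
      _ = D (t x y z) - t (D x) y z := by rw [hD x y z]; abel
      _ = ⁅D, ternaryRightMul t (y ⊗ₜ z)⁆ x := by simp [Ring.lie_def]

theorem TernaryLeibnizId.isTernaryDerivation_ternaryRightMul
    (ht : TernaryLeibnizId fun x y z => t x y z) (a : M ⊗[R] M) :
    IsTernaryDerivation t (ternaryRightMul t a) := by
  intro x y z
  induction a with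
  | zero => simp
  | add a b ha hb => simp only [map_add, LinearMap.add_apply, ha, hb]; abel
  | tmul u v => exact ht x y z u v

theorem TernaryLeibnizId.leibnizId_ternaryTensorBracket
    (ht : TernaryLeibnizId fun x y z => t x y z) :
    LeibnizId fun a b => ternaryTensorBracket t a b :=
  leibnizId_of_map_lie (ternaryRightMul t) fun a b =>
    (ht.isTernaryDerivation_ternaryRightMul b).ternaryRightMul_lie a

end TernaryBracket

theorem ternaryLeibniz_tensor_leibniz_general {R M : Type*} [CommRing R] [AddCommGroup M]
    [Module R M] (t : M →ₗ[R] M →ₗ[R] M →ₗ[R] M) (ht : TernaryLeibnizId fun x y z => t x y z) :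
    ∃ B : M ⊗[R] M →ₗ[R] M ⊗[R] M →ₗ[R] M ⊗[R] M,
      (∀ x y x' y' : M,
        B (x ⊗ₜ[R] y) (x' ⊗ₜ[R] y') = x ⊗ₜ[R] (t y x' y') + (t x x' y') ⊗ₜ[R] y) ∧
      LeibnizId fun a b : M ⊗[R] M => B a b :=
  ⟨ternaryTensorBracket t, ternaryTensorBracket_tmul t, ht.leibnizId_ternaryTensorBracket⟩

/-- Let `(L, [-,-,-])` be a ternary Leibniz algebra over a field `K`. Then `L ⊗ L` carries a
Leibniz algebra structure, where the bracket is the bilinear map determined on pure tensors by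
`{x⊗y, x'⊗y'} := x ⊗ [y,x',y'] + [x,x',y'] ⊗ y`. -/
theorem ternaryLeibniz_tensor_leibniz (t : L →ₗ[K] L →ₗ[K] L →ₗ[K] L)
    (ht : TernaryLeibnizId fun x y z => t x y z) :
    ∃ B : L ⊗[K] L →ₗ[K] L ⊗[K] L →ₗ[K] L ⊗[K] L,
      (∀ x y x' y' : L,
        B (x ⊗ₜ[K] y) (x' ⊗ₜ[K] y') = x ⊗ₜ[K] (t y x' y') + (t x x' y') ⊗ₜ[K] y) ∧
      LeibnizId fun a b : L ⊗[K] L => B a b :=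
  ternaryLeibniz_tensor_leibniz_general t ht
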